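/- Max-plus primal space fundamental solution representation of Riccati solutions (main theorem): Assume M is a symmetric n×n real matrix satisfying: γ²·I − Bᵀ(R_k(M))B is positive definite for all k ≥ 0, R(M) − M is positive definite, and MB(γ²·I − BᵀMB)⁻¹BᵀM is positive definite. Fix k ≥ 1 and suppose the auxiliary value function Ŝ_k(x,z) := (S_k ψ(·,z))(x) is finite and quadratic, Ŝ_k(x,z) = (1/2)[x;z]ᵀQ_k[x;z], with Q_k²² − M positive definite, and that the primal kernel S_k(x,y) := −sup_{z∈ℝⁿ} { (1/2)(z−y)ᵀM(z−y) − Ŝ_k(x,z) } is quadratic with symmetric Hessian Λ_k, i.e. S_k(x,y) = (1/2)[x;y]ᵀΛ_k[x;y]. Let P0 be a symmetric n×n matrix with P0 − M positive definite, γ²·I − Bᵀ(R_i(P0))B positive definite for all 0 ≤ i ≤ k−1, and Λ_k²² + P0 negative definite. Then R_k(P0) = Λ_k¹¹ − Λ_k¹²(P0 + Λ_k²²)⁻¹Λ_k²¹. -/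

import Mathlib

open Matrix

/-- The Riccati operator `R(P) = Φ + AᵀPA + AᵀPB(γ²I − BᵀPB)⁻¹BᵀPA`. -/
noncomputable def Ric {n m : ℕ} (A : Matrix (Fin n) (Fin n) ℝ) (B : Matrix (Fin n) (Fin m) ℝ)
    (Φ : Matrix (Fin n) (Fin n) ℝ) (γ : ℝ) (P : Matrix (Fin n) (Fin n) ℝ) :
    Matrix (Fin n) (Fin n) ℝ :=
  Φ + Aᵀ * P * A +
    Aᵀ * P * B * (γ ^ 2 • (1 : Matrix (Fin m) (Fin m) ℝ) - Bᵀ * P * B)⁻¹ * Bᵀ * P * A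

/-- The one-step dynamic programming evolution operator on extended-real-valued functions:
`(Sφ)(x) = sup_w {½xᵀΦx − (γ²/2)|w|² + φ(Ax+Bw)}`. -/
noncomputable def DP {n m : ℕ} (A : Matrix (Fin n) (Fin n) ℝ) (B : Matrix (Fin n) (Fin m) ℝ)
    (Φ : Matrix (Fin n) (Fin n) ℝ) (γ : ℝ) (φ : (Fin n → ℝ) → EReal) :
    (Fin n → ℝ) → EReal :=
  fun x => ⨆ w : Fin m → ℝ,
    (((1 / 2) * (x ⬝ᵥ Φ *ᵥ x) - γ ^ 2 / 2 * (w ⬝ᵥ w) : ℝ) : EReal) + φ (A *ᵥ x + B *ᵥ w)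

/-- The primal-space kernel `S_k(x,y) = −sup_z {½(z−y)ᵀM(z−y) − Ŝ_k(x,z)}` expressed via
the quadratic form `Ŝ_k(x,z) = ½[x;z]ᵀQ_k[x;z]`. -/
noncomputable def primalKernel {n : ℕ} (M : Matrix (Fin n) (Fin n) ℝ)
    (Q : Matrix (Fin n ⊕ Fin n) (Fin n ⊕ Fin n) ℝ) (x y : Fin n → ℝ) : ℝ :=
  -(⨆ z : Fin n → ℝ,
      (1 / 2) * ((z - y) ⬝ᵥ M *ᵥ (z - y)) -
        (1 / 2) * (Sum.elim x z ⬝ᵥ Q *ᵥ Sum.elim x z))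


theorem pf_swap {a b : ℕ} (X : Matrix (Fin a) (Fin b) ℝ) (u : Fin a → ℝ) (v : Fin b → ℝ) :
    u ⬝ᵥ X *ᵥ v = v ⬝ᵥ Xᵀ *ᵥ u := by
  rw [dotProduct_mulVec, mulVec_transpose, dotProduct_comm]

theorem pf_swapS {a : ℕ} {X : Matrix (Fin a) (Fin a) ℝ} (h : X.IsSymm) (u v : Fin a → ℝ) :
    u ⬝ᵥ X *ᵥ v = v ⬝ᵥ X *ᵥ u := by
  rw [pf_swap, h.eq]

theorem pf_symm {a : ℕ} {G : Matrix (Fin a) (Fin a) ℝ} (h : G.PosDef) : G.IsSymm := by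
  have := h.isHermitian
  rwa [Matrix.IsHermitian, conjTranspose_eq_transpose_of_trivial] at this

theorem pf_quadmax {a : ℕ} {G : Matrix (Fin a) (Fin a) ℝ} (h : G.PosDef) (w w' : Fin a → ℝ) :
    (G *ᵥ w) ⬝ᵥ w' - 1 / 2 * (w' ⬝ᵥ G *ᵥ w') ≤ 1 / 2 * (w ⬝ᵥ G *ᵥ w) := by
  have h1 := h.posSemidef.dotProduct_mulVec_nonneg (w - w')
  simp only [star_trivial, mulVec_sub, dotProduct_sub, sub_dotProduct] at h1
  have h2 := pf_swapS (pf_symm h) w w'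
  have h3 := dotProduct_comm (G *ᵥ w) w'
  linarith

theorem pf_inv {a : ℕ} {G : Matrix (Fin a) (Fin a) ℝ} (h : G.PosDef) (b : Fin a → ℝ) :
    G *ᵥ (G⁻¹ *ᵥ b) = b := by
  rw [mulVec_mulVec, mul_nonsing_inv _ ((isUnit_iff_isUnit_det _).1 h.isUnit), one_mulVec]

theorem pf_iSup {ι : Type*} (g : ι → ℝ) (c : ℝ) (i : ι) (hi : g i = c) (h : ∀ j, g j ≤ c) :
    (⨆ j, (g j : EReal)) = (c : EReal) := by
  apply le_antisymm
  · exact iSup_le fun j => EReal.coe_le_coe_iff.2 (h j)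
  · rw [← hi]
    exact le_iSup (fun j => (g j : EReal)) i

theorem pf_ext {a : ℕ} {X Y : Matrix (Fin a) (Fin a) ℝ} (hX : X.IsSymm) (hY : Y.IsSymm)
    (h : ∀ x, x ⬝ᵥ X *ᵥ x = x ⬝ᵥ Y *ᵥ x) : X = Y := by
  have key : ∀ u v, u ⬝ᵥ X *ᵥ v = u ⬝ᵥ Y *ᵥ v := by
    intro u v
    have h1 := h (u + v)
    simp only [mulVec_add, dotProduct_add, add_dotProduct] at h1
    have h2 := pf_swapS hX u v
    have h3 := pf_swapS hY u v
    have h4 := h u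
    have h5 := h v
    linarith
  ext i j
  have := key (Pi.single i 1) (Pi.single j 1)
  simpa using this

theorem pf_ric_symm {n m : ℕ} (A : Matrix (Fin n) (Fin n) ℝ) (B : Matrix (Fin n) (Fin m) ℝ)
    (Φ : Matrix (Fin n) (Fin n) ℝ) (hΦ : Φ.IsSymm) (γ : ℝ) (P : Matrix (Fin n) (Fin n) ℝ)
    (hP : P.IsSymm) : (Ric A B Φ γ P).IsSymm := by
  unfold Ric Matrix.IsSymm
  simp only [transpose_add, transpose_mul, transpose_nonsing_inv, transpose_sub, transpose_smul,
    transpose_one, transpose_transpose, hΦ.eq, hP.eq, Matrix.mul_assoc]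

theorem pf_ric {n m : ℕ} (A : Matrix (Fin n) (Fin n) ℝ) (B : Matrix (Fin n) (Fin m) ℝ)
    (Φ : Matrix (Fin n) (Fin n) ℝ) (γ : ℝ) (P : Matrix (Fin n) (Fin n) ℝ)
    (hP : P.IsSymm)
    (hG : (γ ^ 2 • (1 : Matrix (Fin m) (Fin m) ℝ) - Bᵀ * P * B).PosDef) :
    DP A B Φ γ (fun x => (((1 / 2) * (x ⬝ᵥ P *ᵥ x) : ℝ) : EReal)) =
      fun x => (((1 / 2) * (x ⬝ᵥ (Ric A B Φ γ P) *ᵥ x) : ℝ) : EReal) := by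
  funext x
  unfold DP
  simp only [← EReal.coe_add]
  set G := γ ^ 2 • (1 : Matrix (Fin m) (Fin m) ℝ) - Bᵀ * P * B with hGdef
  set b := Bᵀ *ᵥ (P *ᵥ (A *ᵥ x)) with hb
  have e1 : ∀ w : Fin m → ℝ, w ⬝ᵥ G *ᵥ w =
      γ ^ 2 * (w ⬝ᵥ w) - (B *ᵥ w) ⬝ᵥ P *ᵥ (B *ᵥ w) := by
    intro w
    rw [hGdef, sub_mulVec, dotProduct_sub, smul_mulVec, one_mulVec, dotProduct_smul, smul_eq_mul,
      ← mulVec_mulVec, ← mulVec_mulVec, pf_swap Bᵀ, transpose_transpose, dotProduct_comm _ (B *ᵥ w)]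
  have e2 : ∀ w : Fin m → ℝ, b ⬝ᵥ w = (A *ᵥ x) ⬝ᵥ P *ᵥ (B *ᵥ w) := by
    intro w
    rw [pf_swapS hP, hb, dotProduct_comm, pf_swap Bᵀ, transpose_transpose, dotProduct_comm]
  have e3 : x ⬝ᵥ (Ric A B Φ γ P) *ᵥ x = x ⬝ᵥ Φ *ᵥ x + (A *ᵥ x) ⬝ᵥ P *ᵥ (A *ᵥ x)
      + b ⬝ᵥ G⁻¹ *ᵥ b := by
    unfold Ric
    rw [← hGdef]
    simp only [add_mulVec, dotProduct_add, ← mulVec_mulVec]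
    rw [← hb, e2, pf_swap Aᵀ, pf_swap Aᵀ, transpose_transpose, dotProduct_comm _ (A *ᵥ x),
      dotProduct_comm _ (A *ᵥ x)]
  have e4 : ∀ w : Fin m → ℝ, (A *ᵥ x + B *ᵥ w) ⬝ᵥ P *ᵥ (A *ᵥ x + B *ᵥ w) =
      (A *ᵥ x) ⬝ᵥ P *ᵥ (A *ᵥ x) + 2 * (b ⬝ᵥ w) + (B *ᵥ w) ⬝ᵥ P *ᵥ (B *ᵥ w) := by
    intro w
    simp only [mulVec_add, dotProduct_add, add_dotProduct]
    rw [e2, pf_swapS hP (B *ᵥ w) (A *ᵥ x)]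
    ring
  have hi := pf_inv hG b
  have e5 : (G⁻¹ *ᵥ b) ⬝ᵥ G *ᵥ (G⁻¹ *ᵥ b) = b ⬝ᵥ G⁻¹ *ᵥ b := by
    rw [hi, dotProduct_comm]
  apply pf_iSup _ _ (G⁻¹ *ᵥ b)
  · rw [e3, e4]
    have := e1 (G⁻¹ *ᵥ b)
    linarith
  · intro w
    rw [e3, e4]
    have h1 := pf_quadmax hG (G⁻¹ *ᵥ b) w
    have := e1 w
    rw [e5, hi] at h1
    linarith

theorem pf_ric_iter {n m : ℕ} (A : Matrix (Fin n) (Fin n) ℝ) (B : Matrix (Fin n) (Fin m) ℝ)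
    (Φ : Matrix (Fin n) (Fin n) ℝ) (hΦ : Φ.IsSymm) (γ : ℝ) (P : Matrix (Fin n) (Fin n) ℝ)
    (hP : P.IsSymm) (k : ℕ)
    (hG : ∀ i < k, (γ ^ 2 • (1 : Matrix (Fin m) (Fin m) ℝ) -
      Bᵀ * ((Ric A B Φ γ)^[i] P) * B).PosDef) :
    ((Ric A B Φ γ)^[k] P).IsSymm ∧
    (DP A B Φ γ)^[k] (fun x => (((1 / 2) * (x ⬝ᵥ P *ᵥ x) : ℝ) : EReal)) =
      fun x => (((1 / 2) * (x ⬝ᵥ ((Ric A B Φ γ)^[k] P) *ᵥ x) : ℝ) : EReal) := by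
  induction k with
  | zero => exact ⟨hP, rfl⟩
  | succ k ih =>
    obtain ⟨h1, h2⟩ := ih fun i hi => hG i (by omega)
    rw [Function.iterate_succ_apply', Function.iterate_succ_apply', h2]
    exact ⟨pf_ric_symm A B Φ hΦ γ _ h1, pf_ric A B Φ γ _ h1 (hG k (by omega))⟩

theorem pf_add_iSup {ι : Type*} (a : ℝ) (f : ι → EReal) :
    (a : EReal) + ⨆ i, f i = ⨆ i, ((a : EReal) + f i) := by
  apply le_antisymm
  · rw [add_comm, ← EReal.le_sub_iff_add_le (by simp) (by simp)]
    refine iSup_le fun i => ?_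
    rw [EReal.le_sub_iff_add_le (by simp) (by simp), add_comm]
    exact le_iSup (fun i => (a : EReal) + f i) i
  · exact iSup_le fun i => add_le_add_right (le_iSup f i) _

theorem pf_DP_iSup {n m : ℕ} (A : Matrix (Fin n) (Fin n) ℝ) (B : Matrix (Fin n) (Fin m) ℝ)
    (Φ : Matrix (Fin n) (Fin n) ℝ) (γ : ℝ) {ι : Type*} (k : ℕ) (f : ι → (Fin n → ℝ) → EReal) :
    (DP A B Φ γ)^[k] (fun x => ⨆ i, f i x) = fun x => ⨆ i, (DP A B Φ γ)^[k] (f i) x := by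
  induction k with
  | zero => rfl
  | succ k ih =>
    simp only [Function.iterate_succ_apply', ih]
    funext x
    unfold DP
    simp only [pf_add_iSup]
    rw [iSup_comm]

theorem pf_DP_const {n m : ℕ} (A : Matrix (Fin n) (Fin n) ℝ) (B : Matrix (Fin n) (Fin m) ℝ)
    (Φ : Matrix (Fin n) (Fin n) ℝ) (γ : ℝ) (k : ℕ) (f : (Fin n → ℝ) → EReal) (c : ℝ) :
    (DP A B Φ γ)^[k] (fun x => (c : EReal) + f x) =
      fun x => (c : EReal) + (DP A B Φ γ)^[k] f x := by
  induction k with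
  | zero => rfl
  | succ k ih =>
    simp only [Function.iterate_succ_apply', ih]
    funext x
    unfold DP
    simp only [pf_add_iSup]
    congr 1
    funext w
    rw [add_left_comm]

theorem pf_blocks {n : ℕ} (Q : Matrix (Fin n ⊕ Fin n) (Fin n ⊕ Fin n) ℝ) (hQ : Q.IsSymm)
    (x z : Fin n → ℝ) :
    Sum.elim x z ⬝ᵥ Q *ᵥ Sum.elim x z = x ⬝ᵥ Q.toBlocks₁₁ *ᵥ x + 2 * ((Q.toBlocks₂₁ *ᵥ x) ⬝ᵥ z)
      + z ⬝ᵥ Q.toBlocks₂₂ *ᵥ z := by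
  have h12 : Q.toBlocks₁₂ᵀ = Q.toBlocks₂₁ := by
    ext i j
    exact hQ.apply _ _
  conv_lhs => rw [← fromBlocks_toBlocks Q]
  rw [fromBlocks_mulVec, sumElim_dotProduct_sumElim]
  simp only [Sum.elim_comp_inl, Sum.elim_comp_inr, dotProduct_add]
  rw [pf_swap Q.toBlocks₁₂, h12, dotProduct_comm _ z]
  ring

/-- Max-plus primal space fundamental solution representation of Riccati solutions:
`R_k(P₀) = Λ_k¹¹ − Λ_k¹²(P₀ + Λ_k²²)⁻¹Λ_k²¹`. -/
theorem primal_fundamental_solution {n m : ℕ}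
    (A : Matrix (Fin n) (Fin n) ℝ) (B : Matrix (Fin n) (Fin m) ℝ)
    (Φ : Matrix (Fin n) (Fin n) ℝ) (hΦsymm : Φ.IsSymm) (hΦ : Φ.PosDef)
    (γ : ℝ) (hγ : 0 < γ)
    (M : Matrix (Fin n) (Fin n) ℝ) (hMsymm : M.IsSymm)
    (hM1 : ∀ k : ℕ,
      (γ ^ 2 • (1 : Matrix (Fin m) (Fin m) ℝ) - Bᵀ * ((Ric A B Φ γ)^[k] M) * B).PosDef)
    (hM2 : (Ric A B Φ γ M - M).PosDef)
    (hM3 : (M * B * (γ ^ 2 • (1 : Matrix (Fin m) (Fin m) ℝ) - Bᵀ * M * B)⁻¹ * Bᵀ * M).PosDef)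
    (k : ℕ) (hk : 1 ≤ k)
    (Q : Matrix (Fin n ⊕ Fin n) (Fin n ⊕ Fin n) ℝ) (hQsymm : Q.IsSymm)
    -- `Ŝ_k` is finite and quadratic with Hessian `Q_k`:
    (hQ : ∀ x z : Fin n → ℝ,
      (DP A B Φ γ)^[k]
          (fun x' => (((1 / 2) * ((x' - z) ⬝ᵥ M *ᵥ (x' - z)) : ℝ) : EReal)) x =
        (((1 / 2) * (Sum.elim x z ⬝ᵥ Q *ᵥ Sum.elim x z) : ℝ) : EReal))
    (hQ22 : (Q.toBlocks₂₂ - M).PosDef)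
    (Λ : Matrix (Fin n ⊕ Fin n) (Fin n ⊕ Fin n) ℝ) (hΛsymm : Λ.IsSymm)
    -- the primal kernel `S_k` is quadratic with Hessian `Λ_k`:
    (hΛ : ∀ x y : Fin n → ℝ,
      primalKernel M Q x y = (1 / 2) * (Sum.elim x y ⬝ᵥ Λ *ᵥ Sum.elim x y))
    (P₀ : Matrix (Fin n) (Fin n) ℝ) (hP₀symm : P₀.IsSymm) (hP₀M : (P₀ - M).PosDef)
    (hP₀ : ∀ i < k,
      (γ ^ 2 • (1 : Matrix (Fin m) (Fin m) ℝ) - Bᵀ * ((Ric A B Φ γ)^[i] P₀) * B).PosDef)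
    (hneg : (-(Λ.toBlocks₂₂ + P₀)).PosDef) :
    (Ric A B Φ γ)^[k] P₀ =
      Λ.toBlocks₁₁ - Λ.toBlocks₁₂ * (P₀ + Λ.toBlocks₂₂)⁻¹ * Λ.toBlocks₂₁ := by
  have hMinv : ∀ b, M *ᵥ (M⁻¹ *ᵥ b) = b := by
    intro b
    have hu : IsUnit M.det := by
      have := (isUnit_iff_isUnit_det _).1 hM3.isUnit
      rw [det_mul] at this
      exact isUnit_of_mul_isUnit_right this
    rw [mulVec_mulVec, mul_nonsing_inv _ hu, one_mulVec]
  obtain ⟨hRs, hR⟩ := pf_ric_iter A B Φ hΦsymm γ P₀ hP₀symm k hP₀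
  have hsq : ∀ u v : Fin n → ℝ, (u - v) ⬝ᵥ M *ᵥ (u - v) =
      u ⬝ᵥ M *ᵥ u - 2 * ((M *ᵥ v) ⬝ᵥ u) + v ⬝ᵥ M *ᵥ v := by
    intro u v
    simp only [mulVec_sub, dotProduct_sub, sub_dotProduct]
    rw [pf_swapS hMsymm v u, dotProduct_comm (M *ᵥ v) u]
    ring
  -- support of the terminal cost by shifted basis functions
  let ζ : (Fin n → ℝ) → (Fin n → ℝ) := fun y => M⁻¹ *ᵥ (-((P₀ - M) *ᵥ y))
  have hζ : ∀ y, M *ᵥ ζ y = -((P₀ - M) *ᵥ y) := fun y => hMinv _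
  let c : (Fin n → ℝ) → ℝ := fun y =>
    1 / 2 * (y ⬝ᵥ P₀ *ᵥ y) - 1 / 2 * ((y - ζ y) ⬝ᵥ M *ᵥ (y - ζ y))
  have hc : ∀ y u, c y + 1 / 2 * ((u - ζ y) ⬝ᵥ M *ᵥ (u - ζ y)) ≤ 1 / 2 * (u ⬝ᵥ P₀ *ᵥ u) := by
    intro y u
    have h1 := pf_quadmax hP₀M y u
    simp only [c, hsq, hζ, neg_dotProduct]
    have h2 : ∀ v : Fin n → ℝ, v ⬝ᵥ (P₀ - M) *ᵥ v = v ⬝ᵥ P₀ *ᵥ v - v ⬝ᵥ M *ᵥ v := by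
      intro v
      rw [sub_mulVec, dotProduct_sub]
    have h3 := dotProduct_comm ((P₀ - M) *ᵥ y) y
    rw [h2 u, h2 y] at h1
    rw [h2 y] at h3
    linarith
  have hφ : (fun u : Fin n → ℝ => (((1 / 2) * (u ⬝ᵥ P₀ *ᵥ u) : ℝ) : EReal)) =
      fun u => ⨆ y, ((c y : EReal) + (((1 / 2) * ((u - ζ y) ⬝ᵥ M *ᵥ (u - ζ y)) : ℝ) : EReal)) := by
    funext u
    simp only [← EReal.coe_add]
    symm
    apply pf_iSup _ _ u
    · simp only [c]
      ring
    · exact fun y => hc y u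
  -- value as supremum
  have hV : ∀ x, (((1 / 2) * (x ⬝ᵥ ((Ric A B Φ γ)^[k] P₀) *ᵥ x) : ℝ) : EReal) =
      ⨆ y, ((c y + (1 / 2) * (Sum.elim x (ζ y) ⬝ᵥ Q *ᵥ Sum.elim x (ζ y)) : ℝ) : EReal) := by
    intro x
    have h1 := congrFun hR x
    rw [hφ, pf_DP_iSup] at h1
    simp only [pf_DP_const, hQ] at h1
    rw [← h1]
    simp only [EReal.coe_add]
  -- primal kernel
  have hG2 : ∀ v : Fin n → ℝ, v ⬝ᵥ (Q.toBlocks₂₂ - M) *ᵥ v =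
      v ⬝ᵥ Q.toBlocks₂₂ *ᵥ v - v ⬝ᵥ M *ᵥ v := by
    intro v
    rw [sub_mulVec, dotProduct_sub]
  have hker : ∀ x y z0 : Fin n → ℝ,
      (Q.toBlocks₂₂ - M) *ᵥ z0 = -(M *ᵥ y) - Q.toBlocks₂₁ *ᵥ x → ∀ z : Fin n → ℝ,
      (1 / 2) * ((z - y) ⬝ᵥ M *ᵥ (z - y)) - (1 / 2) * (Sum.elim x z ⬝ᵥ Q *ᵥ Sum.elim x z) ≤
      (1 / 2) * ((z0 - y) ⬝ᵥ M *ᵥ (z0 - y)) -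
        (1 / 2) * (Sum.elim x z0 ⬝ᵥ Q *ᵥ Sum.elim x z0) := by
    intro x y z0 h z
    have h1 := pf_quadmax hQ22 z0 z
    have h2 := dotProduct_comm ((Q.toBlocks₂₂ - M) *ᵥ z0) z0
    rw [hG2 z0] at h1 h2
    rw [hG2 z] at h1
    rw [h] at h1 h2
    simp only [sub_dotProduct, neg_dotProduct] at h1 h2
    rw [pf_blocks Q hQsymm, pf_blocks Q hQsymm, hsq, hsq]
    linarith
  have hge : ∀ x y z : Fin n → ℝ,
      (1 / 2) * (Sum.elim x y ⬝ᵥ Λ *ᵥ Sum.elim x y) + (1 / 2) * ((z - y) ⬝ᵥ M *ᵥ (z - y)) ≤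
        (1 / 2) * (Sum.elim x z ⬝ᵥ Q *ᵥ Sum.elim x z) := by
    intro x y z
    rw [← hΛ, primalKernel]
    have hb : BddAbove (Set.range fun z : Fin n → ℝ => (1 / 2) * ((z - y) ⬝ᵥ M *ᵥ (z - y)) -
        (1 / 2) * (Sum.elim x z ⬝ᵥ Q *ᵥ Sum.elim x z)) := by
      have hk1 := hker x y _ (pf_inv hQ22 _)
      exact ⟨_, Set.forall_mem_range.2 hk1⟩
    have := le_ciSup hb z
    linarith
  have hle : ∀ x z : Fin n → ℝ, ∃ y : Fin n → ℝ,
      (1 / 2) * (Sum.elim x z ⬝ᵥ Q *ᵥ Sum.elim x z) ≤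
      (1 / 2) * (Sum.elim x y ⬝ᵥ Λ *ᵥ Sum.elim x y) + (1 / 2) * ((z - y) ⬝ᵥ M *ᵥ (z - y)) := by
    intro x z
    refine ⟨M⁻¹ *ᵥ (-((Q.toBlocks₂₂ - M) *ᵥ z) - Q.toBlocks₂₁ *ᵥ x), ?_⟩
    set y := M⁻¹ *ᵥ (-((Q.toBlocks₂₂ - M) *ᵥ z) - Q.toBlocks₂₁ *ᵥ x) with hy
    have hMy : M *ᵥ y = -((Q.toBlocks₂₂ - M) *ᵥ z) - Q.toBlocks₂₁ *ᵥ x := hMinv _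
    rw [← hΛ, primalKernel]
    have := ciSup_le (hker x y z (by rw [hMy]; abel))
    linarith
  have hflip : ∀ u v : Fin n → ℝ, (u - v) ⬝ᵥ M *ᵥ (u - v) = (v - u) ⬝ᵥ M *ᵥ (v - u) := by
    intro u v
    rw [← neg_sub v u, mulVec_neg, neg_dotProduct, dotProduct_neg, neg_neg]
  -- final supremum
  have hW : ∀ x, (((1 / 2) * (x ⬝ᵥ ((Ric A B Φ γ)^[k] P₀) *ᵥ x) : ℝ) : EReal) =
      ⨆ y : Fin n → ℝ, (((1 / 2) * (Sum.elim x y ⬝ᵥ Λ *ᵥ Sum.elim x y) +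
        1 / 2 * (y ⬝ᵥ P₀ *ᵥ y) : ℝ) : EReal) := by
    intro x
    rw [hV]
    apply le_antisymm
    · refine iSup_le fun y => ?_
      obtain ⟨y', hy'⟩ := hle x (ζ y)
      refine le_iSup_of_le y' (EReal.coe_le_coe_iff.2 ?_)
      have := hc y y'
      rw [hflip] at hy'
      linarith
    · refine iSup_le fun y => ?_
      refine le_iSup_of_le y (EReal.coe_le_coe_iff.2 ?_)
      have := hge x y (ζ y)
      rw [hflip] at this
      simp only [c]
      linarith
  have h12 : Λ.toBlocks₂₁ᵀ = Λ.toBlocks₁₂ := by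
    ext i j
    exact hΛsymm.apply _ _
  have h11 : Λ.toBlocks₁₁ᵀ = Λ.toBlocks₁₁ := by
    ext i j
    exact hΛsymm.apply _ _
  have h22 : Λ.toBlocks₂₂ᵀ = Λ.toBlocks₂₂ := by
    ext i j
    exact hΛsymm.apply _ _
  have hinv : (P₀ + Λ.toBlocks₂₂)⁻¹ = -(-(Λ.toBlocks₂₂ + P₀))⁻¹ := by
    have hu := (isUnit_iff_isUnit_det _).1 hneg.isUnit
    apply inv_eq_left_inv
    rw [add_comm P₀, neg_mul, ← mul_neg, nonsing_inv_mul _ hu]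
  refine pf_ext hRs ?_ ?_
  · unfold Matrix.IsSymm
    simp only [transpose_sub, transpose_mul, transpose_nonsing_inv, transpose_add, h11, h22,
      hP₀symm.eq, ← h12, transpose_transpose, Matrix.mul_assoc]
  · intro x
    set G := -(Λ.toBlocks₂₂ + P₀) with hG
    set b := Λ.toBlocks₂₁ *ᵥ x with hb
    have g1 : ∀ v : Fin n → ℝ, v ⬝ᵥ G *ᵥ v = -(v ⬝ᵥ Λ.toBlocks₂₂ *ᵥ v) - v ⬝ᵥ P₀ *ᵥ v := by
      intro v
      rw [hG, neg_mulVec, add_mulVec, dotProduct_neg, dotProduct_add]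
      ring
    have g2 : x ⬝ᵥ (Λ.toBlocks₁₁ - Λ.toBlocks₁₂ * (P₀ + Λ.toBlocks₂₂)⁻¹ * Λ.toBlocks₂₁) *ᵥ x =
        x ⬝ᵥ Λ.toBlocks₁₁ *ᵥ x + b ⬝ᵥ G⁻¹ *ᵥ b := by
      rw [hinv, sub_mulVec, dotProduct_sub, ← mulVec_mulVec, ← mulVec_mulVec, ← hb, ← h12,
        pf_swap Λ.toBlocks₂₁ᵀ, transpose_transpose, ← hb, neg_mulVec, neg_dotProduct,
        dotProduct_comm b]
      ring
    have hi := pf_inv hneg b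
    have e5 : (G⁻¹ *ᵥ b) ⬝ᵥ G *ᵥ (G⁻¹ *ᵥ b) = b ⬝ᵥ G⁻¹ *ᵥ b := by
      rw [hi, dotProduct_comm]
    have hx := hW x
    rw [pf_iSup _ (1 / 2 * (x ⬝ᵥ Λ.toBlocks₁₁ *ᵥ x + b ⬝ᵥ G⁻¹ *ᵥ b)) (G⁻¹ *ᵥ b)] at hx
    · rw [g2]
      have := EReal.coe_injective hx
      linarith
    · rw [pf_blocks Λ hΛsymm]
      have := g1 (G⁻¹ *ᵥ b)
      linarith
    · intro y
      rw [pf_blocks Λ hΛsymm]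
      have h1 := pf_quadmax hneg (G⁻¹ *ᵥ b) y
      have := g1 y
      rw [e5, hi] at h1
      linarith
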